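/- Let d ≥ 1, let Π₁ be a d×d real matrix, and let ‖·‖_* be a vector norm on ℝ^d whose induced matrix norm satisfies |||Π₁|||_* ≤ ϖ for some ϖ ∈ (0,1). Let s₀ ≥ 1 and α ∈ (0,1), and let ι = (1,0,…,0)' ∈ ℝ^d. Then for every δ > 0 there exist constants s₁ > 0, ϖ̃ ∈ (0,1) and C < ∞ such that for all z₁ ∈ ℝ and all z₂ ∈ ℝ^d, s₁‖Π₁z₂ + z₁ι‖_*^{2s₀α} ≤ s₁‖z₂‖_*^{2s₀α} − ϖ̃ s₁^α ‖z₂‖_*^{2s₀α²} + δ|z₁|^{2s₀α} + C. -/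

import Mathlib

/-- A vector norm on ℝ^d, given as a function satisfying the norm axioms. -/
def IsVectorNorm {d : ℕ} (N : (Fin d → ℝ) → ℝ) : Prop :=
  (∀ x, 0 ≤ N x) ∧ (∀ x, N x = 0 ↔ x = 0) ∧
  (∀ (c : ℝ) (x : Fin d → ℝ), N (c • x) = |c| * N x) ∧
  (∀ x y : Fin d → ℝ, N (x + y) ≤ N x + N y)

/-- The matrix norm induced by a vector norm N: |||A||| = sup_{N x = 1} N (A x). -/
noncomputable def inducedMatNorm {d : ℕ} (N : (Fin d → ℝ) → ℝ)
    (A : Matrix (Fin d) (Fin d) ℝ) : ℝ :=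
  sSup {c : ℝ | ∃ x : Fin d → ℝ, N x = 1 ∧ c = N (A.mulVec x)}

/-!
Since `ϖ + (1 - ϖ) / 2 = (1 + ϖ) / 2 < 1`, the number `ϖ a + b` is at most
`(1 + ϖ) / 2 * max a (2 b / (1 - ϖ))`. Raising this to a power `p > 0` shows that
`‖A x + z v‖ ^ p ≤ r ‖x‖ ^ p + K |z| ^ p` with `r < 1`. A small factor `s` makes `s K ≤ δ`, and the
gain `s (1 - r) ‖x‖ ^ p` dominates every multiple of a lower power of `‖x‖` up to an additive
constant.
-/

theorem mul_add_rpow_le {w p a b : ℝ} (hw₀ : 0 ≤ w) (hw₁ : w < 1) (hp : 0 ≤ p) (ha : 0 ≤ a)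
    (hb : 0 ≤ b) :
    (w * a + b) ^ p ≤ ((1 + w) / 2) ^ p * (a ^ p + (2 / (1 - w) * b) ^ p) := by
  have hgap : 0 < 1 - w := sub_pos.2 hw₁
  set c := 2 / (1 - w) * b with hc
  have hc₀ : 0 ≤ c := by positivity
  have hb_eq : b = (1 - w) / 2 * c := by rw [hc]; field_simp
  have hmax : w * a + b ≤ (1 + w) / 2 * max a c := by
    calc w * a + b = w * a + (1 - w) / 2 * c := by rw [← hb_eq]
      _ ≤ w * max a c + (1 - w) / 2 * max a c := by
        gcongr
        · exact le_max_left a c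
        · exact le_max_right a c
      _ = (1 + w) / 2 * max a c := by ring
  calc (w * a + b) ^ p ≤ ((1 + w) / 2 * max a c) ^ p := by gcongr
    _ = ((1 + w) / 2) ^ p * max (a ^ p) (c ^ p) := by
      rw [Real.mul_rpow (by positivity) (le_max_of_le_left ha),
        (Real.monotoneOn_rpow_Ici_of_exponent_nonneg hp).map_max ha hc₀]
    _ ≤ ((1 + w) / 2) ^ p * (a ^ p + c ^ p) := by
      gcongr
      exact max_le_add_of_nonneg (by positivity) (by positivity)

theorem exists_forall_mul_rpow_le_mul_rpow_add {p q D : ℝ} (hq : 0 ≤ q) (hqp : q < p) (hD : 0 < D)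
    (B : ℝ) : ∃ C : ℝ, ∀ x : ℝ, 0 ≤ x → B * x ^ q ≤ D * x ^ p + C := by
  have hp : 0 < p := hq.trans_lt hqp
  set θ := q / p with hθ
  have hθ₀ : 0 ≤ θ := by positivity
  have hθ₁ : 0 < 1 - θ := sub_pos.2 ((div_lt_one hp).2 hqp)
  -- `y` is chosen so that weighted AM-GM for `x ^ p` and `y` has the coefficient `|B|` on the left.
  set y := (|B| / D) ^ (1 - θ)⁻¹ with hy
  have hy₀ : 0 ≤ y := by positivity
  have hy_rpow : D * y ^ (1 - θ) = |B| := by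
    rw [hy, Real.rpow_inv_rpow (by positivity) hθ₁.ne', mul_div_cancel₀ _ hD.ne']
  refine ⟨D * ((1 - θ) * y), fun x hx => ?_⟩
  have hx_rpow : (x ^ p) ^ θ = x ^ q := by
    rw [← Real.rpow_mul hx, hθ, mul_div_cancel₀ _ hp.ne']
  calc B * x ^ q ≤ |B| * x ^ q := by gcongr; exact le_abs_self B
    _ = D * ((x ^ p) ^ θ * y ^ (1 - θ)) := by rw [hx_rpow, ← hy_rpow]; ring
    _ ≤ D * (θ * x ^ p + (1 - θ) * y) := by
      gcongr
      exact Real.geom_mean_le_arith_mean2_weighted hθ₀ hθ₁.le (by positivity) hy₀ (by ring)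
    _ ≤ D * (1 * x ^ p + (1 - θ) * y) := by gcongr; exact (sub_pos.1 hθ₁).le
    _ = D * x ^ p + D * ((1 - θ) * y) := by ring

section Seminorms

variable {𝕜 E : Type*} [SeminormedRing 𝕜] [AddGroup E] [SMul 𝕜 E]

theorem seminorm_add_smul_rpow_le (N : Seminorm 𝕜 E) {w p : ℝ} (hw₀ : 0 ≤ w) (hw₁ : w < 1)
    (hp : 0 ≤ p) {x y : E} (hy : N y ≤ w * N x) (z : 𝕜) (v : E) :
    N (y + z • v) ^ p
      ≤ ((1 + w) / 2) ^ p * (N x ^ p + (2 / (1 - w) * N v) ^ p * ‖z‖ ^ p) := by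
  have : 0 < 1 - w := sub_pos.2 hw₁
  have htriangle : N (y + z • v) ≤ w * N x + N v * ‖z‖ := by
    calc N (y + z • v) ≤ N y + N (z • v) := map_add_le_add N y (z • v)
      _ = N y + N v * ‖z‖ := by rw [map_smul_eq_mul, mul_comm]
      _ ≤ w * N x + N v * ‖z‖ := by gcongr
  calc N (y + z • v) ^ p ≤ (w * N x + N v * ‖z‖) ^ p := by gcongr
    _ ≤ ((1 + w) / 2) ^ p * (N x ^ p + (2 / (1 - w) * (N v * ‖z‖)) ^ p) :=
      mul_add_rpow_le hw₀ hw₁ hp (by positivity) (by positivity)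
    _ = ((1 + w) / 2) ^ p * (N x ^ p + (2 / (1 - w) * N v) ^ p * ‖z‖ ^ p) := by
      rw [← mul_assoc, Real.mul_rpow (by positivity) (norm_nonneg z)]

theorem stmt_12_general (N : Seminorm 𝕜 E) {A : E → E} {ϖ : ℝ} (hϖ₀ : 0 ≤ ϖ) (hϖ₁ : ϖ < 1)
    (hA : ∀ x, N (A x) ≤ ϖ * N x) (v : E) {p q : ℝ} (hq : 0 ≤ q) (hqp : q < p) {δ : ℝ}
    (hδ : 0 < δ) :
    ∃ s : ℝ, 0 < s ∧ ∀ κ : ℝ, ∃ C : ℝ, ∀ (z : 𝕜) (x : E),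
      s * N (A x + z • v) ^ p ≤ s * N x ^ p - κ * N x ^ q + δ * ‖z‖ ^ p + C := by
  have hp : 0 < p := hq.trans_lt hqp
  set r := ((1 + ϖ) / 2) ^ p
  have hr : r < 1 := Real.rpow_lt_one (by positivity) (by linarith) hp
  set K := (2 / (1 - ϖ) * N v) ^ p
  obtain ⟨s, hs, hsδ⟩ := exists_pos_mul_lt hδ (r * K)
  refine ⟨s, hs, fun κ => ?_⟩
  obtain ⟨C, hC⟩ :=
    exists_forall_mul_rpow_le_mul_rpow_add hq hqp (mul_pos hs (sub_pos.2 hr)) κ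
  refine ⟨C, fun z x => ?_⟩
  have hlower : κ * N x ^ q ≤ s * (1 - r) * N x ^ p + C := hC (N x) (apply_nonneg N x)
  calc s * N (A x + z • v) ^ p ≤ s * (r * (N x ^ p + K * ‖z‖ ^ p)) := by
        gcongr
        exact seminorm_add_smul_rpow_le N hϖ₀ hϖ₁ hp.le (hA x) z v
    _ = s * N x ^ p - s * (1 - r) * N x ^ p + r * K * s * ‖z‖ ^ p := by ring
    _ ≤ s * N x ^ p - s * (1 - r) * N x ^ p + δ * ‖z‖ ^ p := by gcongr
    _ ≤ s * N x ^ p - κ * N x ^ q + δ * ‖z‖ ^ p + C := by linarith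

end Seminorms

theorem exists_forall_seminorm_map_le {𝕜 V : Type*} [NontriviallyNormedField 𝕜] [CompleteSpace 𝕜]
    [AddCommGroup V] [Module 𝕜 V] [FiniteDimensional 𝕜 V] (N : Seminorm 𝕜 V)
    (hN : ∀ x, N x = 0 → x = 0) (f : V →ₗ[𝕜] V) : ∃ K : ℝ, ∀ x, N (f x) ≤ K * N x := by
  let : Norm V := ⟨N⟩
  have core : NormedSpace.Core 𝕜 V :=
    { norm_nonneg := apply_nonneg N
      norm_smul := map_smul_eq_mul N
      norm_triangle := map_add_le_add N
      norm_eq_zero_iff := fun x => ⟨hN x, fun hx => hx ▸ map_zero N⟩ }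
  let : NormedAddCommGroup V := NormedAddCommGroup.ofCore core
  let : NormedSpace 𝕜 V := NormedSpace.ofCore core
  exact ⟨‖LinearMap.toContinuousLinearMap f‖, (LinearMap.toContinuousLinearMap f).le_opNorm⟩

namespace IsVectorNorm

variable {d : ℕ} {N : (Fin d → ℝ) → ℝ}

/-- A vector norm as a bundled seminorm, which makes Mathlib's lemmas on seminorms available; its
definiteness is forgotten. -/
def toSeminorm (hN : IsVectorNorm N) : Seminorm ℝ (Fin d → ℝ) :=
  Seminorm.of N hN.2.2.2 hN.2.2.1

theorem bddAbove_apply_mulVec (hN : IsVectorNorm N) (A : Matrix (Fin d) (Fin d) ℝ) :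
    BddAbove {c : ℝ | ∃ x : Fin d → ℝ, N x = 1 ∧ c = N (A.mulVec x)} := by
  obtain ⟨K, hK⟩ :=
    exists_forall_seminorm_map_le hN.toSeminorm (fun x => (hN.2.1 x).1) A.mulVecLin
  refine ⟨K, ?_⟩
  rintro _ ⟨x, hx, rfl⟩
  calc N (A.mulVec x) ≤ K * N x := hK x
    _ = K := by rw [hx, mul_one]

theorem apply_mulVec_le (hN : IsVectorNorm N) (A : Matrix (Fin d) (Fin d) ℝ) (x : Fin d → ℝ) :
    N (A.mulVec x) ≤ inducedMatNorm N A * N x := by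
  have hbdd := hN.bddAbove_apply_mulVec A
  obtain ⟨hnonneg, hzero, hsmul, -⟩ := hN
  rcases (hnonneg x).eq_or_lt' with hx | hx
  · obtain rfl := (hzero x).1 hx
    rw [Matrix.mulVec_zero, hx, mul_zero]
  · have habs : |(N x)⁻¹| = (N x)⁻¹ := abs_of_pos (inv_pos.2 hx)
    have hunit : N ((N x)⁻¹ • x) = 1 := by rw [hsmul, habs, inv_mul_cancel₀ hx.ne']
    have hle : N (A.mulVec ((N x)⁻¹ • x)) ≤ inducedMatNorm N A := le_csSup hbdd ⟨_, hunit, rfl⟩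
    rwa [Matrix.mulVec_smul, hsmul, habs, inv_mul_le_iff₀' hx] at hle

end IsVectorNorm

/-- drift bound for the component V₂.  If |||Pi1|||_* ≤ ϖ < 1, s₀ ≥ 1,
α ∈ (0,1) and ι = (1,0,…,0)', then for every δ > 0 there are s₁ > 0, ϖ̃ ∈ (0,1) and
C < ∞ such that for all z₁ ∈ ℝ and z₂ ∈ ℝ^d:
s₁‖Pi1z₂+z₁ι‖_*^{2s₀α} ≤ s₁‖z₂‖_*^{2s₀α} − ϖ̃s₁^α‖z₂‖_*^{2s₀α²} + δ|z₁|^{2s₀α} + C. -/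
theorem stmt_12 (d : ℕ) (hd : 1 ≤ d) (Pi1 : Matrix (Fin d) (Fin d) ℝ)
    (Nstar : (Fin d → ℝ) → ℝ) (hN : IsVectorNorm Nstar)
    (ϖ : ℝ) (hϖ0 : 0 < ϖ) (hϖ1 : ϖ < 1) (hop : inducedMatNorm Nstar Pi1 ≤ ϖ)
    (s₀ α : ℝ) (hs₀ : 1 ≤ s₀) (hα0 : 0 < α) (hα1 : α < 1) :
    ∀ δ : ℝ, 0 < δ → ∃ s₁ : ℝ, 0 < s₁ ∧ ∃ ϖt : ℝ, 0 < ϖt ∧ ϖt < 1 ∧ ∃ C : ℝ,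
      ∀ (z₁ : ℝ) (z₂ : Fin d → ℝ),
        s₁ * Nstar (Pi1.mulVec z₂ + fun i : Fin d => if (i : ℕ) = 0 then z₁ else 0)
            ^ (2 * s₀ * α)
          ≤ s₁ * Nstar z₂ ^ (2 * s₀ * α)
            - ϖt * s₁ ^ α * Nstar z₂ ^ (2 * s₀ * α ^ 2)
            + δ * |z₁| ^ (2 * s₀ * α) + C := by
  intro δ hδ
  have hcontract (x : Fin d → ℝ) : Nstar (Pi1.mulVec x) ≤ ϖ * Nstar x :=
    (hN.apply_mulVec_le Pi1 x).trans (mul_le_mul_of_nonneg_right hop (hN.1 x))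
  have hexp : 2 * s₀ * α ^ 2 < 2 * s₀ * α := by
    gcongr
    exact pow_lt_self_of_lt_one₀ hα0 hα1 one_lt_two
  obtain ⟨s, hs, hdrift⟩ := stmt_12_general hN.toSeminorm hϖ0.le hϖ1 hcontract
    (fun i : Fin d => if (i : ℕ) = 0 then 1 else 0) (by positivity) hexp hδ
  obtain ⟨C, hC⟩ := hdrift (1 / 2 * s ^ α)
  refine ⟨s, hs, 1 / 2, by norm_num, by norm_num, C, fun z₁ z₂ => ?_⟩
  have hι : (fun i : Fin d => if (i : ℕ) = 0 then z₁ else 0)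
      = z₁ • fun i : Fin d => if (i : ℕ) = 0 then (1 : ℝ) else 0 := by
    ext i; simp
  rw [hι]
  exact hC z₁ z₂
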